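/- Let m ≥ 2 and let H be the Hankel tensor of order m and dimension 3 whose parameter vector h ∈ ℂ^{2m+1} is given by h_2 = 1 and h_l = 0 for all l ≠ 2 (this is the Hankel tensor associated with the form binom(m,2)·x^{m−2}y² + m·x^{m−1}z). Then rank_V(H) = 2m − 1. -/

import Mathlib

open scoped BigOperators
open MvPolynomial

noncomputable section

/-- An order-`m`, dimension-`n` complex tensor. -/
abbrev Tensor (m n : ℕ) := (Fin m → Fin n) → ℂ

/-- Tensors expressible as a sum of `r` rank-one tensors. -/
def cpSet (m n r : ℕ) : Set (Tensor m n) :=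
  {T | ∃ u : Fin r → Fin m → Fin n → ℂ, ∀ i, T i = ∑ k, ∏ j, u k j (i j)}

/-- Tensors expressible as a sum of `r` symmetric rank-one tensors. -/
def symSet (m n r : ℕ) : Set (Tensor m n) :=
  {T | ∃ v : Fin r → Fin n → ℂ, ∀ i, T i = ∑ k, ∏ j, v k (i j)}

/-- The Vandermonde vector `v(a,b) ∈ ℂ^n`, `v(a,b)_i = a^(n-1-i) * b^i`. -/
def vand (n : ℕ) (a b : ℂ) : Fin n → ℂ := fun i => a ^ (n - 1 - (i : ℕ)) * b ^ (i : ℕ)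

/-- Tensors expressible as a sum of `r` Vandermonde rank-one tensors. -/
def vandSet (m n r : ℕ) : Set (Tensor m n) :=
  {T | ∃ ab : Fin r → ℂ × ℂ, ∀ i, T i = ∑ k, ∏ j, vand n (ab k).1 (ab k).2 (i j)}

/-- The cp rank of a tensor. -/
def cpRank {m n : ℕ} (T : Tensor m n) : ℕ := sInf {r | T ∈ cpSet m n r}

/-- The symmetric rank of a tensor. -/
def symRank {m n : ℕ} (T : Tensor m n) : ℕ := sInf {r | T ∈ symSet m n r}

/-- The Vandermonde rank of a tensor. -/
def vandRank {m n : ℕ} (T : Tensor m n) : ℕ := sInf {r | T ∈ vandSet m n r}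

/-- The border rank of a tensor (closure in the product topology). -/
def brank {m n : ℕ} (T : Tensor m n) : ℕ := sInf {r | T ∈ closure (cpSet m n r)}

/-- The symmetric border rank of a tensor. -/
def bSymRank {m n : ℕ} (T : Tensor m n) : ℕ := sInf {r | T ∈ closure (symSet m n r)}

/-- The border Vandermonde rank of a tensor. -/
def bVandRank {m n : ℕ} (T : Tensor m n) : ℕ := sInf {r | T ∈ closure (vandSet m n r)}

/-- `T` is the Hankel tensor with parameter vector `h ∈ ℂ^{(n-1)m+1}`. -/
def IsHankel {m n : ℕ} (T : Tensor m n) (h : Fin ((n - 1) * m + 1) → ℂ) : Prop :=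
  ∀ i : Fin m → Fin n, T i = h ⟨∑ j, (i j : ℕ), by
    have h1 : ∑ j, (i j : ℕ) ≤ ∑ _j : Fin m, (n - 1) :=
      Finset.sum_le_sum fun j _ => Nat.le_pred_of_lt (i j).isLt
    simp only [Finset.sum_const, Finset.card_univ, Fintype.card_fin, smul_eq_mul] at h1
    exact Nat.lt_succ_of_le (h1.trans (le_of_eq (Nat.mul_comm m (n - 1))))⟩

/-- The `(d-r+1) × (r+1)` Hankel (catalecticant) matrix `C_{d-r,r}(h)` of `h ∈ ℂ^{d+1}`. -/
def hMat (d r : ℕ) (h : Fin (d + 1) → ℂ) : Matrix (Fin (d - r + 1)) (Fin (r + 1)) ℂ :=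
  Matrix.of fun i j => if hij : (i : ℕ) + (j : ℕ) < d + 1 then h ⟨(i : ℕ) + (j : ℕ), hij⟩ else 0

/-- The binary form `f(x,y) = f_0 x^r + f_1 x^(r-1) y + ⋯ + f_r y^r`. -/
def binForm (r : ℕ) (f : Fin (r + 1) → ℂ) : MvPolynomial (Fin 2) ℂ :=
  ∑ j : Fin (r + 1), C (f j) * X 0 ^ (r - (j : ℕ)) * X 1 ^ (j : ℕ)

/-- The binary form `h(x,y) = ∑_j binom(d,j) h_j x^j y^(d-j)` associated with `h ∈ ℂ^{d+1}`. -/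
def assocForm (d : ℕ) (h : Fin (d + 1) → ℂ) : MvPolynomial (Fin 2) ℂ :=
  ∑ j : Fin (d + 1), C ((d.choose (j : ℕ) : ℂ) * h j) * X 0 ^ (j : ℕ) * X 1 ^ (d - (j : ℕ))

/-- Parameter vectors of binary forms of Waring rank at most `r`. -/
def waringSet (d r : ℕ) : Set (Fin (d + 1) → ℂ) :=
  {h | ∃ ab : Fin r → ℂ × ℂ,
    assocForm d h = ∑ i, (C (ab i).1 * X 0 + C (ab i).2 * X 1) ^ d}

/-- The Waring rank of the binary form associated with `h`. -/
def waringRank (d : ℕ) (h : Fin (d + 1) → ℂ) : ℕ := sInf {r | h ∈ waringSet d r}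

/-- The border Waring rank of the binary form associated with `h`. -/
def bWaringRank (d : ℕ) (h : Fin (d + 1) → ℂ) : ℕ := sInf {r | h ∈ closure (waringSet d r)}

/-- Every `l ≤ 2m` is a sum of `m` indices from `Fin 3`. -/
lemma exists_index_sum_eq (m : ℕ) :
    ∀ l ≤ 2 * m, ∃ i : Fin m → Fin 3, ∑ j, (i j : ℕ) = l := by
  induction m with
  | zero => intro l hl; exact ⟨Fin.elim0, by simp; omega⟩
  | succ m ih =>
    intro l hl
    obtain ⟨i, hi⟩ := ih (l - min l 2) (by omega)
    refine ⟨Fin.cons ⟨min l 2, by omega⟩ i, ?_⟩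
    rw [Fin.sum_univ_succ]
    simp only [Fin.cons_zero, Fin.cons_succ, hi]
    omega

/-- The entries of a symmetric Vandermonde power depend only on the sum of the indices. -/
lemma prod_vand_three (m : ℕ) (a b : ℂ) (i : Fin m → Fin 3) :
    ∏ j, vand 3 a b (i j) = a ^ (2 * m - ∑ j, (i j : ℕ)) * b ^ (∑ j, (i j : ℕ)) := by
  simp only [vand, Finset.prod_mul_distrib, Finset.prod_pow_eq_pow_sum]
  congr 2
  rw [Finset.sum_tsub_distrib _ fun j _ => by have := (i j).isLt; omega]
  simp [mul_comm]

/-- A Hankel tensor of dimension 3 is a sum of `r` Vandermonde powers iff its parameters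
are the corresponding power sums. -/
lemma mem_vandSet_three_iff {m r : ℕ} {H : Tensor m 3} {h : ℕ → ℂ}
    (hH : IsHankel H fun l => h l) :
    H ∈ vandSet m 3 r ↔ ∃ ab : Fin r → ℂ × ℂ, ∀ l ≤ 2 * m,
      ∑ k, (ab k).1 ^ (2 * m - l) * (ab k).2 ^ l = h l := by
  refine exists_congr fun ab => ?_
  simp only [hH _, prod_vand_three]
  constructor
  · intro hab l hl
    obtain ⟨i, rfl⟩ := exists_index_sum_eq m l hl
    exact (hab i).symm
  · intro hab i
    refine (hab _ ?_).symm
    calc ∑ j, (i j : ℕ) ≤ ∑ _j : Fin m, 2 :=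
          Finset.sum_le_sum fun j _ => Nat.le_of_lt_succ (i j).isLt
      _ = 2 * m := by simp [mul_comm]

/-- Apolar pairing of a sum of `d`-th powers with `x^e y^l` times a product of linear forms,
when the only nonzero moment is the second one. -/
lemma sum_mul_prod_linear_eq {ι κ : Type*} [Fintype κ] {d : ℕ} {a b : κ → ℂ}
    (hab : ∀ l ≤ d, ∑ k, a k ^ (d - l) * b k ^ l = if l = 2 then 1 else 0)
    (α β : ι → ℂ) (s : Finset ι) :
    ∀ e l, 2 ≤ l → e + l + s.card = d →
      ∑ k, a k ^ e * b k ^ l * ∏ j ∈ s, (α j * b k + β j * a k)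
        = if l = 2 then ∏ j ∈ s, β j else 0 := by
  classical
  induction s using Finset.induction_on with
  | empty =>
    intro e l _ he
    simp only [Finset.card_empty, add_zero] at he
    have := hab l (by omega)
    rw [show d - l = e by omega] at this
    simpa using this
  | insert j s hj ih =>
    intro e l hl he
    rw [Finset.card_insert_of_notMem hj] at he
    have h₁ := ih e (l + 1) (by omega) (by omega)
    have h₂ := ih (e + 1) l hl (by omega)
    rw [if_neg (by omega)] at h₁
    calc _ = α j * (∑ k, a k ^ e * b k ^ (l + 1) * ∏ j ∈ s, (α j * b k + β j * a k))
          + β j * ∑ k, a k ^ (e + 1) * b k ^ l * ∏ j ∈ s, (α j * b k + β j * a k) := by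
          rw [Finset.mul_sum, Finset.mul_sum, ← Finset.sum_add_distrib]
          refine Finset.sum_congr rfl fun k _ => ?_
          rw [Finset.prod_insert hj]
          ring
      _ = _ := by
          rw [h₁, h₂, Finset.prod_insert hj]
          split_ifs <;> ring

/-- The binary form of degree `d` whose only parameter is the second one is not a sum of
fewer than `d - 1` powers of linear forms. -/
lemma le_of_power_sums_eq {d r : ℕ} {a b : Fin r → ℂ}
    (hab : ∀ l ≤ d, ∑ k, a k ^ (d - l) * b k ^ l = if l = 2 then 1 else 0) :
    d - 1 ≤ r := by
  by_contra! hr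
  have key := sum_mul_prod_linear_eq hab (fun j => if b j = 0 then 0 else a j)
    (fun j => if b j = 0 then 1 else -b j) Finset.univ (d - 2 - r) 2 le_rfl
    (by simp; omega)
  rw [if_pos rfl, Finset.sum_eq_zero] at key
  · refine Finset.prod_ne_zero_iff.2 (fun j _ => ?_) key.symm
    split_ifs with h
    · exact one_ne_zero
    · exact neg_ne_zero.2 h
  · intro k _
    by_cases h : b k = 0
    · simp [h]
    · refine mul_eq_zero_of_right _ (Finset.prod_eq_zero (Finset.mem_univ k) ?_)
      simp only [if_neg h]
      ring

/-- The binary form of degree `d ≥ 4` whose only parameter is the second one is a sum of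
`d - 1` powers of linear forms, supported at the `(d - 1)`-th roots of unity. -/
lemma exists_power_sums_eq {d : ℕ} (hd : 4 ≤ d) :
    ∃ ab : Fin (d - 1) → ℂ × ℂ, ∀ l ≤ d,
      ∑ k, (ab k).1 ^ (d - l) * (ab k).2 ^ l = if l = 2 then 1 else 0 := by
  obtain ⟨N, rfl⟩ : ∃ N, d = N + 1 := ⟨d - 1, by omega⟩
  have hN : N ≠ 0 := by omega
  obtain ⟨ω, hω⟩ : ∃ ω : ℂ, IsPrimitiveRoot ω N := ⟨_, Complex.isPrimitiveRoot_exp N hN⟩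
  have hroot : ∀ k : ℕ, ∃ a : ℂ, a ^ (N + 1) = (ω ^ (N - 2)) ^ k / N := fun k =>
    IsAlgClosed.exists_pow_nat_eq _ N.succ_pos
  choose a ha using hroot
  refine ⟨fun k => (a k, a k * ω ^ (k : ℕ)), fun l hl => ?_⟩
  have hterm : ∀ k : ℕ, a k ^ (N + 1 - l) * (a k * ω ^ k) ^ l
      = (ω ^ (N - 2 + l)) ^ k / N := by
    intro k
    rw [mul_pow, ← mul_assoc, ← pow_add, Nat.sub_add_cancel hl, ha]
    ring
  simp only [hterm]
  rw [Nat.add_sub_cancel, Fin.sum_univ_eq_sum_range (fun k => (ω ^ (N - 2 + l)) ^ k / (N : ℂ)),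
    ← Finset.sum_div]
  split_ifs with h
  · subst h
    rw [Nat.sub_add_cancel (by omega), hω.pow_eq_one]
    simp [hN]
  · have hne : ω ^ (N - 2 + l) ≠ 1 := by
      rw [Ne, hω.pow_eq_one_iff_dvd]
      rintro ⟨c, hc⟩
      have h1 : 0 < c := by
        rcases Nat.eq_zero_or_pos c with rfl | h
        · omega
        · exact h
      have h2 : c < 2 := by
        by_contra! h2
        have := Nat.mul_le_mul_left N h2
        omega
      obtain rfl : c = 1 := by omega
      omega
    rw [geom_sum_eq hne, ← pow_mul, mul_comm, pow_mul, hω.pow_eq_one]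
    simp

/-- The Hankel tensor of order `m ≥ 2` and dimension 3 associated with
the form `binom(m,2)·x^(m-2)y² + m·x^(m-1)z` has Vandermonde rank `2m-1`. -/
theorem stmt_19 (m : ℕ) (hm : 2 ≤ m) (H : Tensor m 3)
    (hH : IsHankel H (fun l : Fin ((3 - 1) * m + 1) =>
      if (l : ℕ) = 2 then 1 else 0)) :
    vandRank H = 2 * m - 1 := by
  have hmem : ∀ r, H ∈ vandSet m 3 r ↔ _ := fun r =>
    mem_vandSet_three_iff (h := fun l => if l = 2 then 1 else 0) hH
  have hmin : H ∈ vandSet m 3 (2 * m - 1) :=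
    (hmem _).2 (exists_power_sums_eq (by omega))
  refine le_antisymm (Nat.sInf_le hmin) (le_csInf ⟨_, hmin⟩ fun r hr => ?_)
  obtain ⟨ab, hab⟩ := (hmem r).1 hr
  exact le_of_power_sums_eq hab
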